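/- Every fully homogeneous BNPG game on a complete bipartite graph K_{n_1,n_2} (parts of sizes n_1 ≥ 1 and n_2 ≥ 1, with every vertex of one part adjacent to every vertex of the other part and no other edges) has a pure strategy Nash equilibrium. -/

import Mathlib

/-- The number of neighbors of `v` playing `1` (`true`) in the strategy profile `x`. -/
noncomputable def nOnes {V : Type*} (G : SimpleGraph V) (x : V → Bool) (v : V) : ℕ :=
  Nat.card {w : V // G.Adj v w ∧ x w = true}

/-- `x` is a pure strategy Nash equilibrium (PSNE) of the BNPG game `(G, g, c)`:
for every player `v`, if `v` plays `1` then `g_v(n_v+1) - g_v(n_v) ≥ c_v`, and if `v` plays `0`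
then `g_v(n_v+1) - g_v(n_v) ≤ c_v`. -/
def IsPSNE {V : Type*} (G : SimpleGraph V) (g : V → ℕ → ℝ) (c : V → ℝ) (x : V → Bool) : Prop :=
  ∀ v : V,
    (x v = true → c v ≤ g v (nOnes G x v + 1) - g v (nOnes G x v)) ∧
    (x v = false → g v (nOnes G x v + 1) - g v (nOnes G x v) ≤ c v)

/-!
In a bipartite graph whose vertices of one color all have the same degree, a profile that is
constant on each color class is governed by a `2 × 2` game between the classes: a player sees
either no neighbor or all her neighbors playing `1`. Since the players are homogeneous, both classes
have the same best responses to an opponent class playing `0`, and this is what excludes cyclic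
best responses as in matching pennies.
-/

/-- Playing `b` is a best response for a player with externality function `g` and cost `c`
when `n` of her neighbors play `1`; this is the condition which `IsPSNE` imposes on each player. -/
def IsBestResponse (g : ℕ → ℝ) (c : ℝ) (n : ℕ) (b : Bool) : Prop :=
  (b = true → c ≤ g (n + 1) - g n) ∧ (b = false → g (n + 1) - g n ≤ c)

lemma exists_isBestResponse (g : ℕ → ℝ) (c : ℝ) (n : ℕ) : ∃ b, IsBestResponse g c n b := by
  rcases le_total c (g (n + 1) - g n) with invest | abstain
  · exact ⟨true, by simp [IsBestResponse, invest]⟩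
  · exact ⟨false, by simp [IsBestResponse, abstain]⟩

lemma exists_forall_isBestResponse_ite (g : ℕ → ℝ) (c : ℝ) (d : Bool → ℕ) :
    ∃ p : Bool → Bool, ∀ i, IsBestResponse g c (if p (!i) then d i else 0) (p i) := by
  obtain ⟨_ | _, zero_br⟩ := exists_isBestResponse g c 0
  · exact ⟨fun _ ↦ false, fun _ ↦ zero_br⟩
  choose r r_br using fun i ↦ exists_isBestResponse g c (d i)
  by_cases all_invest : ∀ i, r i = true
  · exact ⟨fun _ ↦ true, fun i ↦ by simpa [all_invest i] using r_br i⟩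
  obtain ⟨j, abstain⟩ : ∃ j, r j = false := by
    simpa only [not_forall, Bool.not_eq_true] using all_invest
  -- Class `j` answers full investment with `0`, and `0` is answered by full investment.
  refine ⟨fun i ↦ i != j, fun i ↦ ?_⟩
  obtain rfl | rfl := Bool.eq_or_eq_not i j
  · simpa [abstain] using r_br i
  · simpa using zero_br

section Coloring

variable {V : Type*} {G : SimpleGraph V}

lemma nOnes_comp_coloring (C : G.Coloring Bool) (p : Bool → Bool) (v : V)
    [Fintype (G.neighborSet v)] :
    nOnes G (p ∘ C) v = if p (!C v) then G.degree v else 0 := by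
  have color_of_adj {w : V} (h : G.Adj v w) : C w = !C v :=
    Bool.eq_not.mpr (C.valid h).symm
  have ones_iff (w : V) : G.Adj v w ∧ (p ∘ C) w = true ↔ G.Adj v w ∧ p (!C v) = true :=
    and_congr_right fun h ↦ by rw [Function.comp_apply, color_of_adj h]
  simp only [nOnes, ones_iff]
  split_ifs with invest
  · simp only [invest, and_true]
    rw [← G.card_neighborSet_eq_degree v, ← Nat.card_eq_fintype_card]
    rfl
  · simp [invest]

theorem biclique_psne_general [G.LocallyFinite] (C : G.Coloring Bool) (d : Bool → ℕ)
    (degree_eq : ∀ v, G.degree v = d (C v)) (g : ℕ → ℝ) (c : ℝ) :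
    ∃ x : V → Bool, IsPSNE G (fun _ ↦ g) (fun _ ↦ c) x := by
  obtain ⟨p, p_br⟩ := exists_forall_isBestResponse_ite g c d
  refine ⟨p ∘ C, fun v ↦ ?_⟩
  rw [nOnes_comp_coloring, degree_eq]
  exact p_br (C v)

end Coloring

section CompleteBipartite

variable {V W : Type*}

lemma degree_completeBipartiteGraph_inl [Fintype W] (v : V)
    [Fintype ((completeBipartiteGraph V W).neighborSet (Sum.inl v))] :
    (completeBipartiteGraph V W).degree (Sum.inl v) = Fintype.card W := by
  have neighborFinset_eq : (completeBipartiteGraph V W).neighborFinset (Sum.inl v) =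
      Finset.univ.map Function.Embedding.inr := by
    ext (_ | _) <;> simp
  rw [SimpleGraph.degree, neighborFinset_eq, Finset.card_map, Finset.card_univ]

lemma degree_completeBipartiteGraph_inr [Fintype V] (w : W)
    [Fintype ((completeBipartiteGraph V W).neighborSet (Sum.inr w))] :
    (completeBipartiteGraph V W).degree (Sum.inr w) = Fintype.card V := by
  have neighborFinset_eq : (completeBipartiteGraph V W).neighborFinset (Sum.inr w) =
      Finset.univ.map Function.Embedding.inl := by
    ext (_ | _) <;> simp
  rw [SimpleGraph.degree, neighborFinset_eq, Finset.card_map, Finset.card_univ]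

lemma degree_completeBipartiteGraph_eq_ite_bicoloring [Fintype V] [Fintype W] (u : V ⊕ W)
    [Fintype ((completeBipartiteGraph V W).neighborSet u)] :
    (completeBipartiteGraph V W).degree u =
      if SimpleGraph.CompleteBipartiteGraph.bicoloring V W u then Fintype.card V
      else Fintype.card W := by
  rcases u with v | w
  · exact degree_completeBipartiteGraph_inl v
  · exact degree_completeBipartiteGraph_inr w

end CompleteBipartite

/-- Every fully homogeneous BNPG game on a complete bipartite graph
`K_{n₁,n₂}` with `n₁, n₂ ≥ 1` has a pure strategy Nash equilibrium. -/
theorem biclique_psne (n₁ n₂ : ℕ) (h₁ : 1 ≤ n₁) (h₂ : 1 ≤ n₂) (g : ℕ → ℝ) (c : ℝ)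
    (hMono : Monotone g) (hc : 0 < c) :
    ∃ x : Fin n₁ ⊕ Fin n₂ → Bool,
      IsPSNE (completeBipartiteGraph (Fin n₁) (Fin n₂)) (fun _ => g) (fun _ => c) x := by
  classical
  exact biclique_psne_general (SimpleGraph.CompleteBipartiteGraph.bicoloring _ _)
    (if · then _ else _) (degree_completeBipartiteGraph_eq_ite_bicoloring ·) g c
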